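/- arXiv:2108.07551 — 2 statements merged into one kernel-verified Lean document; each statement's English description precedes it below -/
import Mathlib

section
/- If H is a minimal triangulation of a finite simple graph G, then every minimal separator of H is a minimal separator of G. -/
/-- A tree-decomposition of a graph `G` indexed by nodes of type `ι`. -/
structure TreeDecomp {V : Type} (G : SimpleGraph V) (ι : Type) where
  tree : SimpleGraph ι
  isTree : tree.IsTree
  bag : ι → Finset V
  bags_cover : ∀ v : V, ∃ i : ι, v ∈ bag i
  edges_covered : ∀ ⦃u v : V⦄, G.Adj u v → ∃ i : ι, u ∈ bag i ∧ v ∈ bag i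
  bags_connected : ∀ v : V, (tree.induce {i : ι | v ∈ bag i}).Connected

/-- The treewidth of `G`: the smallest `k` such that `G` has a tree-decomposition
all of whose bags have at most `k + 1` vertices (i.e. of width at most `k`). -/
noncomputable def treewidth {V : Type} (G : SimpleGraph V) : ℕ :=
  sInf { k : ℕ | ∃ (ι : Type) (td : TreeDecomp G ι), ∀ i : ι, (td.bag i).card ≤ k + 1 }

/-- The neighborhood `N_G(C)` of a vertex set `C`. -/
def nbhd {V : Type} (G : SimpleGraph V) (C : Set V) : Set V :=
  {v : V | v ∉ C ∧ ∃ u ∈ C, G.Adj u v}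

/-- `S` separates `a` from `b` in `G`: `a, b ∉ S` and every walk from `a` to `b` meets `S`
(so `a` and `b` lie in distinct components of `G` minus `S`). -/
def Separates {V : Type} (G : SimpleGraph V) (S : Set V) (a b : V) : Prop :=
  a ∉ S ∧ b ∉ S ∧ ∀ p : G.Walk a b, ∃ v ∈ p.support, v ∈ S

/-- `C` is a connected component of `G` minus `S`. -/
def IsCompOf {V : Type} (G : SimpleGraph V) (S : Set V) (C : Set V) : Prop :=
  C.Nonempty ∧ Disjoint C S ∧ (G.induce C).Connected ∧
    ∀ D : Set V, C ⊆ D → Disjoint D S → (G.induce D).Connected → D = C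

/-- `S` is a separator of `G`: `G` minus `S` has more than one connected component. -/
def IsSeparator {V : Type} (G : SimpleGraph V) (S : Set V) : Prop :=
  ∃ C D : Set V, IsCompOf G S C ∧ IsCompOf G S D ∧ C ≠ D

/-- `C` is a full component of `S` in `G`. -/
def IsFullCompOf {V : Type} (G : SimpleGraph V) (S : Set V) (C : Set V) : Prop :=
  IsCompOf G S C ∧ nbhd G C = S

/-- `S` is a minimal separator of `G`: it has at least two full components. -/
def IsMinSep {V : Type} (G : SimpleGraph V) (S : Set V) : Prop :=
  ∃ C D : Set V, IsFullCompOf G S C ∧ IsFullCompOf G S D ∧ C ≠ D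

/-- `R` crosses `S` if `R` separates some pair of vertices of `S`. -/
def Crosses {V : Type} (G : SimpleGraph V) (R S : Set V) : Prop :=
  ∃ a b : V, a ∈ S ∧ b ∈ S ∧ Separates G R a b

/-- `G` is chordal: every cycle with more than 3 vertices has a chord. -/
def IsChordal {V : Type} (G : SimpleGraph V) : Prop :=
  ∀ ⦃v : V⦄ (c : G.Walk v v), c.IsCycle → 3 < c.length →
    ∃ u w : V, u ∈ c.support ∧ w ∈ c.support ∧ G.Adj u w ∧ s(u, w) ∉ c.edges

/-- `H` is a triangulation of `G`. -/
def IsTriangulationOf {V : Type} (H G : SimpleGraph V) : Prop :=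
  IsChordal H ∧ G ≤ H

/-- `H` is a minimal triangulation of `G`. -/
def IsMinimalTriangulationOf {V : Type} (H G : SimpleGraph V) : Prop :=
  IsTriangulationOf H G ∧ ∀ H' : SimpleGraph V, IsTriangulationOf H' G → H' ≤ H → H' = H

/-- `K(S)`: the graph on the same vertex type whose edges join all pairs of
distinct vertices of `S`. -/
def completeOn {V : Type} (S : Set V) : SimpleGraph V :=
  SimpleGraph.fromRel (fun a b => a ∈ S ∧ b ∈ S)

/-- `s` is a maximal clique of `G`. -/
def IsMaximalClique {V : Type} (G : SimpleGraph V) (s : Set V) : Prop :=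
  G.IsClique s ∧ ∀ t : Set V, G.IsClique t → s ⊆ t → s = t

/-- `fill G td`: fill every bag of the tree-decomposition `td` into a clique. -/
def fill {V ι : Type} (G : SimpleGraph V) (td : TreeDecomp G ι) : SimpleGraph V :=
  G ⊔ SimpleGraph.fromRel (fun a b => ∃ i : ι, a ∈ td.bag i ∧ b ∈ td.bag i)

/-- The nodes of the maximal subtree `T(i,j)` of the tree containing `i` but not `j`
(for adjacent `i`, `j`): the nodes reachable from `i` after deleting the edge `{i, j}`. -/
def sideNodes {V ι : Type} {G : SimpleGraph V} (td : TreeDecomp G ι) (i j : ι) : Set ι :=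
  {t : ι | (td.tree.deleteEdges {s(i, j)}).Reachable i t}

/-- `V(i,j)`: the union of the bags of nodes in `T(i,j)`, with the vertices of the
bag of `j` removed. -/
def sideVerts {V ι : Type} {G : SimpleGraph V} (td : TreeDecomp G ι) (i j : ι) : Set V :=
  (⋃ t ∈ sideNodes td i j, (td.bag t : Set V)) \ (td.bag j : Set V)

/-- A perfect elimination order of `G`. -/
def IsPerfectElimOrder {V : Type} [Fintype V] (G : SimpleGraph V)
    (e : Fin (Fintype.card V) ≃ V) : Prop :=
  ∀ i : Fin (Fintype.card V),
    G.IsClique {u : V | G.Adj (e i) u ∧ ∃ j : Fin (Fintype.card V), i < j ∧ e j = u}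

/-- `H` is a minor of `G`, via the branch-set (minor model) characterization. -/
def IsMinorOf {W V : Type} (H : SimpleGraph W) (G : SimpleGraph V) : Prop :=
  ∃ B : W → Set V,
    (∀ w : W, (B w).Nonempty) ∧
    (∀ w : W, (G.induce (B w)).Connected) ∧
    (Pairwise fun w₁ w₂ : W => Disjoint (B w₁) (B w₂)) ∧
    ∀ ⦃w₁ w₂ : W⦄, H.Adj w₁ w₂ → ∃ a ∈ B w₁, ∃ b ∈ B w₂, G.Adj a b

/-- There is a clique minor of `G` minus `C` rooted on `R`, given by branch sets
`B v ∋ v` for `v ∈ R`: disjoint from `C`, pairwise disjoint, each connected, with an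
edge of `G` between every two of them. -/
def HasCliqueMinorRootedAvoiding {V : Type} (G : SimpleGraph V) (R C : Set V) : Prop :=
  ∃ B : R → Set V,
    (∀ v : R, (v : V) ∈ B v) ∧
    (∀ v : R, Disjoint (B v) C) ∧
    (∀ v : R, (G.induce (B v)).Connected) ∧
    (∀ u v : R, u ≠ v → Disjoint (B u) (B v)) ∧
    (∀ u v : R, u ≠ v → ∃ a ∈ B u, ∃ b ∈ B v, G.Adj a b)

/-- `S` is a minor-safe separator of `G`: for every component `C` of `G` minus `S`,
there is a clique minor of `G` minus `C` rooted on `N_G(C)`. -/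
def MinorSafe {V : Type} (G : SimpleGraph V) (S : Set V) : Prop :=
  ∀ C : Set V, IsCompOf G S C → HasCliqueMinorRootedAvoiding G (nbhd G C) C

open SimpleGraph

/-- Two vertices joined by a walk inside `P` are joined by an induced path inside `P`. -/
lemma exists_induced_path {V : Type} {H : SimpleGraph V} {P : Set V} {s t : V}
    (h : ∃ p : H.Walk s t, ∀ x ∈ p.support, x ∈ P) :
    ∃ p : H.Walk s t, p.IsPath ∧ (∀ x ∈ p.support, x ∈ P) ∧
      ∀ u ∈ p.support, ∀ w ∈ p.support, H.Adj u w → s(u, w) ∈ p.edges := by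
  classical
  obtain ⟨p, hp, hmin⟩ := WellFounded.has_min (measure (Walk.length (G := H) (u := s) (v := t))).wf
    {p | ∀ x ∈ p.support, x ∈ P} h
  replace hmin : ∀ q : H.Walk s t, (∀ x ∈ q.support, x ∈ P) → p.length ≤ q.length :=
    fun q hq => not_lt.mp (hmin q hq)
  have shortcut : ∀ {u w : V} (p₁ : H.Walk s u) (p₂ : H.Walk u w) (p₃ : H.Walk w t),
      p = p₁.append (p₂.append p₃) → H.Adj u w → s(u, w) ∈ p.edges := by
    intro u w p₁ p₂ p₃ hpe huw
    have hlen := hmin (p₁.append (.cons huw p₃)) (by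
      intro x hx
      apply hp
      rw [hpe]
      simp only [Walk.mem_support_append_iff, Walk.support_cons, List.mem_cons] at hx ⊢
      rcases hx with hx | rfl | hx
      · exact .inl hx
      · exact .inr (.inl p₂.start_mem_support)
      · exact .inr (.inr hx))
    rw [hpe] at hlen ⊢
    simp only [Walk.length_append, Walk.length_cons] at hlen
    cases p₂ with
    | nil => exact absurd huw (H.loopless.irrefl _)
    | cons h' p₂ =>
      cases p₂ with
      | nil => simp
      | cons h'' p₂ => simp only [Walk.length_cons] at hlen; omega
  refine ⟨p, ?_, hp, ?_⟩
  · rw [← p.bypass_eq_self_of_length_le_length_bypass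
      (hmin _ fun x hx => hp x (p.support_bypass_subset_support hx))]
    exact p.bypass_isPath
  · intro u hu w hw huw
    have hw' := hw
    rw [← p.take_spec hu, Walk.mem_support_append_iff] at hw'
    rcases hw' with hw' | hw'
    · rw [Sym2.eq_swap]
      refine shortcut ((p.takeUntil u hu).takeUntil w hw') ((p.takeUntil u hu).dropUntil w hw')
        (p.dropUntil u hu) ?_ huw.symm
      rw [Walk.append_assoc, Walk.take_spec, Walk.take_spec]
    · refine shortcut (p.takeUntil u hu) ((p.dropUntil u hu).takeUntil w hw')
        ((p.dropUntil u hu).dropUntil w hw') ?_ huw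
      rw [Walk.take_spec, Walk.take_spec]

/-- Two neighbours of a connected set `C` are joined by a walk with all inner vertices in `C`. -/
lemma exists_walk_through {V : Type} {H : SimpleGraph V} {C : Set V}
    (hC : (H.induce C).Connected) {s t : V} (hs : s ∈ nbhd H C) (ht : t ∈ nbhd H C) :
    ∃ p : H.Walk s t, ∀ x ∈ p.support, x ∈ C ∪ {s, t} := by
  obtain ⟨-, a, ha, hsa⟩ := hs
  obtain ⟨-, b, hb, htb⟩ := ht
  obtain ⟨q, hq⟩ : ∃ q : H.Walk a b, ∀ x ∈ q.support, x ∈ C := by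
    obtain ⟨p⟩ := hC.preconnected ⟨a, ha⟩ ⟨b, hb⟩
    refine ⟨p.map (Embedding.induce C).toHom, fun x hx => ?_⟩
    obtain ⟨y, -, rfl⟩ := List.mem_map.mp
      ((congrArg (x ∈ ·) (Walk.support_map (Embedding.induce C).toHom p)).mp hx)
    exact y.2
  refine ⟨.cons hsa.symm (q.concat htb), fun x hx => ?_⟩
  simp only [Walk.support_cons, Walk.support_concat, List.mem_cons, List.mem_append,
    List.not_mem_nil, or_false] at hx
  rcases hx with rfl | hx | rfl
  · simp
  · exact .inl (hq x hx)
  · simp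

lemma IsCompOf.disjoint {V : Type} {H : SimpleGraph V} {S C D : Set V}
    (hC : IsCompOf H S C) (hD : IsCompOf H S D) (hne : C ≠ D) : Disjoint C D := by
  by_contra hCD
  rw [Set.not_disjoint_iff_nonempty_inter] at hCD
  have hconn := induce_union_connected hC.2.2.1.preconnected hD.2.2.1.preconnected hCD
  have hdisj : Disjoint (C ∪ D) S := hC.2.1.union_left hD.2.1
  exact hne ((hC.2.2.2 _ Set.subset_union_left hdisj hconn).symm.trans
    (hD.2.2.2 _ Set.subset_union_right hdisj hconn))

/-- Dirac: minimal separators of chordal graphs are cliques. -/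
lemma IsMinSep.isClique {V : Type} {H : SimpleGraph V} {S : Set V}
    (hS : IsMinSep H S) (hH : IsChordal H) : H.IsClique S := by
  obtain ⟨C, D, ⟨hC, hCS⟩, ⟨hD, hDS⟩, hne⟩ := hS
  have hCD := hC.disjoint hD hne
  intro s hs t ht hst
  by_contra hadj
  obtain ⟨p, hp, hpC, hpi⟩ := exists_induced_path
    (exists_walk_through hC.2.2.1 (hCS.symm ▸ hs) (hCS.symm ▸ ht))
  obtain ⟨q, hq, hqD, hqi⟩ := exists_induced_path
    (exists_walk_through hD.2.2.1 (hDS.symm ▸ ht) (hDS.symm ▸ hs))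
  have two_le : ∀ {x y : V} (r : H.Walk x y), x ≠ y → ¬ H.Adj x y → 2 ≤ r.length := by
    intro x y r hxy hnadj
    cases r with
    | nil => exact absurd rfl hxy
    | cons h r =>
      cases r with
      | nil => exact absurd h hnadj
      | cons h' r => simp
  have hpl := two_le p hst hadj
  have hql := two_le q hst.symm (fun h => hadj h.symm)
  have hcyc : (p.append q).IsCycle := by
    refine hp.isCycle_append hq ?_ (.inl hpl)
    intro x hxp hxq
    have hxs : x ≠ s := by
      rintro rfl
      have := hp.support_nodup
      rw [← p.cons_tail_support, List.nodup_cons] at this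
      exact this.1 hxp
    have hxt : x ≠ t := by
      rintro rfl
      have := hq.support_nodup
      rw [← q.cons_tail_support, List.nodup_cons] at this
      exact this.1 hxq
    have hxC := hpC x (List.mem_of_mem_tail hxp)
    have hxD := hqD x (List.mem_of_mem_tail hxq)
    simp only [Set.mem_union, Set.mem_insert_iff, Set.mem_singleton_iff, hxs, hxt,
      or_false] at hxC hxD
    exact hCD.le_bot ⟨hxC, hxD⟩
  obtain ⟨u, w, hu, hw, huw, hchord⟩ := hH _ hcyc (by rw [Walk.length_append]; omega)
  have cross : ∀ u ∈ p.support, ∀ w ∈ q.support, H.Adj u w →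
      s(u, w) ∈ (p.append q).edges := by
    intro u hu w hw huw
    rw [Walk.edges_append, List.mem_append]
    by_cases hwp : w ∈ p.support
    · exact .inl (hpi u hu w hwp huw)
    by_cases huq : u ∈ q.support
    · exact .inr (hqi u huq w hw huw)
    exfalso
    have huC : u ∈ C := by
      rcases hpC u hu with h | rfl | rfl
      · exact h
      · exact absurd q.end_mem_support huq
      · exact absurd q.start_mem_support huq
    have hwD : w ∈ D := by
      rcases hqD w hw with h | rfl | rfl
      · exact h
      · exact absurd p.end_mem_support hwp
      · exact absurd p.start_mem_support hwp
    have hwS : w ∈ S := hCS ▸ ⟨fun h => hCD.le_bot ⟨h, hwD⟩, u, huC, huw⟩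
    exact hD.2.1.le_bot ⟨hwD, hwS⟩
  rw [Walk.mem_support_append_iff] at hu hw
  rcases hu with hu | hu <;> rcases hw with hw | hw
  · exact hchord (by rw [Walk.edges_append, List.mem_append]; exact .inl (hpi u hu w hw huw))
  · exact hchord (cross u hu w hw huw)
  · exact hchord (Sym2.eq_swap ▸ cross w hw u hu huw.symm)
  · exact hchord (by rw [Walk.edges_append, List.mem_append]; exact .inr (hqi u hu w hw huw))

/-- `H` without its edges between `A` and the complement of `A ∪ T`. -/
def cutOff {V : Type} (H : SimpleGraph V) (T A : Set V) : SimpleGraph V where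
  Adj x y := H.Adj x y ∧ (x ∈ A → y ∈ A ∪ T) ∧ (y ∈ A → x ∈ A ∪ T)
  symm := ⟨fun _ _ h => ⟨h.1.symm, h.2.2, h.2.1⟩⟩
  loopless := ⟨fun _ h => H.loopless.irrefl _ h.1⟩

lemma cutOff_le {V : Type} (H : SimpleGraph V) (T A : Set V) : cutOff H T A ≤ H :=
  fun _ _ h => h.1

lemma exists_mem_support_of_cutOff_walk {V : Type} {H : SimpleGraph V} {T A : Set V} {u w : V}
    (p : (cutOff H T A).Walk u w) (hu : u ∈ A) (hw : w ∉ A) : ∃ x ∈ p.support, x ∈ T := by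
  induction p with
  | nil => exact absurd hu hw
  | @cons u v w h p ih =>
    rcases h.2.1 hu with hv | hv
    · obtain ⟨x, hx, hxT⟩ := ih hv hw
      exact ⟨x, by simp [hx], hxT⟩
    · exact ⟨v, by simp, hv⟩

/-- Cutting off a set along a clique preserves chordality. -/
lemma IsChordal.cutOff {V : Type} {H : SimpleGraph V} (hH : IsChordal H) {T A : Set V}
    (hT : H.IsClique T) (hAT : Disjoint A T) : IsChordal (cutOff H T A) := by
  classical
  intro v c hc hlen
  obtain ⟨u, w, hu, hw, huw, hchord⟩ := hH (c.mapLe (cutOff_le H T A)) (hc.mapLe _) (by simpa)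
  rw [Walk.support_mapLe_eq_support] at hu hw
  rw [Walk.edges_mapLe_eq_edges] at hchord
  by_cases hadj : (_root_.cutOff H T A).Adj u w
  · exact ⟨u, w, hu, hw, hadj, hchord⟩
  obtain ⟨a, b, ha, hb, haA, hbA, hbT⟩ : ∃ a b, a ∈ c.support ∧ b ∈ c.support ∧
      a ∈ A ∧ b ∉ A ∧ b ∉ T := by
    by_cases h₁ : u ∈ A ∧ w ∉ A ∪ T
    · exact ⟨u, w, hu, hw, h₁.1, fun h => h₁.2 (.inl h), fun h => h₁.2 (.inr h)⟩
    by_cases h₂ : w ∈ A ∧ u ∉ A ∪ T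
    · exact ⟨w, u, hw, hu, h₂.1, fun h => h₂.2 (.inl h), fun h => h₂.2 (.inr h)⟩
    exact absurd ⟨huw, not_and_not_right.mp h₁, not_and_not_right.mp h₂⟩ hadj
  have haT : a ∉ T := fun h => hAT.le_bot ⟨haA, h⟩
  have hcyc := hc.rotate ha
  have hb' : b ∈ (c.rotate a ha).support := by simpa using hb
  set p := (c.rotate a ha).takeUntil b hb'
  set q := (c.rotate a ha).dropUntil b hb'
  have hpq : p.append q = c.rotate a ha := Walk.take_spec _ _
  have hdisj : ∀ x ∈ p.support, x ∈ q.support → x ∉ T := by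
    intro x hxp hxq hxT
    have hnd := hcyc.support_nodup
    rw [← hpq, Walk.tail_support_append, List.nodup_append'] at hnd
    rw [Walk.mem_support_iff] at hxp hxq
    rcases hxp with rfl | hxp
    · exact haT hxT
    rcases hxq with rfl | hxq
    · exact hbT hxT
    exact hnd.2.2 hxp hxq
  obtain ⟨x, hx, hxT⟩ := exists_mem_support_of_cutOff_walk p haA hbA
  obtain ⟨y, hy, hyT⟩ := exists_mem_support_of_cutOff_walk q.reverse haA hbA
  rw [Walk.support_reverse, List.mem_reverse] at hy
  have hmem : ∀ z, z ∈ p.support ∨ z ∈ q.support → z ∈ c.support := by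
    intro z hz
    rw [← Walk.mem_support_append_iff, hpq] at hz
    simpa using hz
  refine ⟨x, y, hmem x (.inl hx), hmem y (.inr hy), ⟨hT hxT hyT ?_, fun _ => .inr hyT,
    fun _ => .inr hxT⟩, fun he => ?_⟩
  · rintro rfl
    exact hdisj x hx hy hxT
  · rw [← (c.rotate_edges a ha).mem_iff, ← hpq, Walk.edges_append, List.mem_append] at he
    rcases he with he | he
    · exact hdisj y (p.snd_mem_support_of_mem_edges he) hy hyT
    · exact hdisj x hx (q.fst_mem_support_of_mem_edges he) hxT

/-- In a minimal triangulation `H` of `G`, a set that `G` cuts off along a clique of `H`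
is also cut off in `H`. -/
lemma IsMinimalTriangulationOf.nbhd_subset {V : Type} {G H : SimpleGraph V}
    (hH : IsMinimalTriangulationOf H G) {T A : Set V} (hT : H.IsClique T) (hAT : Disjoint A T)
    (hA : nbhd G A ⊆ T) : nbhd H A ⊆ T := by
  have hle : G ≤ cutOff H T A := by
    intro x y hxy
    refine ⟨hH.1.2 hxy, fun hx => ?_, fun hy => ?_⟩
    · by_cases h : y ∈ A
      · exact .inl h
      · exact .inr (hA ⟨h, x, hx, hxy⟩)
    · by_cases h : x ∈ A
      · exact .inl h
      · exact .inr (hA ⟨h, y, hy, hxy.symm⟩)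
  have heq := hH.2 _ ⟨hH.1.1.cutOff hT hAT, hle⟩ (cutOff_le H T A)
  rintro v ⟨hv, u, hu, huv⟩
  rw [← heq] at huv
  exact (huv.2.1 hu).resolve_left hv

lemma IsFullCompOf.of_minimalTriangulation {V : Type} {G H : SimpleGraph V}
    (hH : IsMinimalTriangulationOf H G) {S C : Set V} (hS : H.IsClique S)
    (hC : IsFullCompOf H S C) : IsFullCompOf G S C := by
  obtain ⟨⟨hne, hdisj, hconn, hmax⟩, hfull⟩ := hC
  have hGS : nbhd G C ⊆ S := by
    rintro v ⟨hv, u, hu, huv⟩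
    exact hfull ▸ ⟨hv, u, hu, hH.1.2 huv⟩
  have mono : ∀ D : Set V, G.induce D ≤ H.induce D := fun D x y h => hH.1.2 h
  refine ⟨⟨hne, hdisj, ?_, fun D hCD hDS hD => hmax D hCD hDS (hD.mono (mono D))⟩,
    hGS.antisymm fun s hs => ?_⟩
  · obtain ⟨a, ha⟩ := hne
    rw [connected_iff_exists_forall_reachable]
    refine ⟨⟨a, ha⟩, ?_⟩
    set A : Set V := {x | ∃ hx : x ∈ C, (G.induce C).Reachable ⟨a, ha⟩ ⟨x, hx⟩}
    have hAC : A ⊆ C := fun x hx => hx.1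
    have hHA : nbhd H A ⊆ S := by
      refine hH.nbhd_subset hS (hdisj.mono_left hAC) ?_
      rintro v ⟨hv, u, ⟨huC, hur⟩, huv⟩
      refine hGS ⟨fun hvC => hv ⟨hvC, hur.trans ?_⟩, u, huC, huv⟩
      exact Adj.reachable (G := G.induce C) (u := ⟨u, huC⟩) (v := ⟨v, hvC⟩) huv
    have closed : ∀ {x y : C}, (H.induce C).Walk x y → (x : V) ∈ A → (y : V) ∈ A := by
      intro x y p hx
      induction p with
      | nil => exact hx
      | @cons u v w h p ih =>
        refine ih ?_
        by_contra hv
        exact hdisj.le_bot ⟨v.2, hHA ⟨hv, u, hx, h⟩⟩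
    intro x
    obtain ⟨p⟩ := hconn.preconnected ⟨a, ha⟩ x
    exact (closed p ⟨ha, .refl _⟩).2
  · by_contra hsG
    have hsub : nbhd G C ⊆ S \ {s} := fun x hx => ⟨hGS hx, fun h => hsG (h ▸ hx)⟩
    have hHC := hH.nbhd_subset (hS.subset Set.sdiff_subset) (hdisj.mono_right Set.sdiff_subset) hsub
    exact (hHC (hfull.symm ▸ hs)).2 rfl

/-- every minimal separator of a minimal triangulation `H` of `G`
is a minimal separator of `G`. -/
theorem minSep_of_minimalTriangulation {V : Type} [Fintype V]
    (G H : SimpleGraph V) (hH : IsMinimalTriangulationOf H G)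
    (S : Set V) (hS : IsMinSep H S) :
    IsMinSep G S := by
  have hclique := hS.isClique hH.1.1
  obtain ⟨C, D, hC, hD, hne⟩ := hS
  exact ⟨C, D, hC.of_minimalTriangulation hH hclique, hD.of_minimalTriangulation hH hclique, hne⟩
end

section
/- Let S be a clique separator of a finite simple graph G. Then tw(G) is the larger of |S| − 1 and the maximum of tw(G[C ∪ N_G(C)]) over all connected components C of G minus S. -/
namespace SimpleGraph

variable {ι : Type*}

/-- A set of nodes is path-convex if it contains every path between two of its nodes. -/
def IsPathConvex (T : SimpleGraph ι) (A : Set ι) : Prop :=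
  ∀ ⦃a b : ι⦄, a ∈ A → b ∈ A → ∀ p : T.Walk a b, p.IsPath → ∀ x ∈ p.support, x ∈ A

namespace IsPathConvex

variable {T : SimpleGraph ι} {A B C : Set ι}

lemma univ : T.IsPathConvex Set.univ := fun _ _ _ _ _ _ _ _ => trivial

lemma inter (hA : T.IsPathConvex A) (hB : T.IsPathConvex B) : T.IsPathConvex (A ∩ B) :=
  fun _ _ ha hb p hp x hx => ⟨hA ha.1 hb.1 p hp x hx, hB ha.2 hb.2 p hp x hx⟩

lemma of_induce_connected (hT : T.IsAcyclic) (hA : (T.induce A).Connected) :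
    T.IsPathConvex A := by
  intro a b ha hb p hp x hx
  obtain ⟨q, hq⟩ := hA.exists_isPath ⟨a, ha⟩ ⟨b, hb⟩
  have hq' : (q.map (Embedding.induce A).toHom).IsPath :=
    hq.map Subtype.val_injective
  have heq : p = q.map (Embedding.induce A).toHom :=
    congrArg Subtype.val ((hT.subsingleton_path a b).elim ⟨p, hp⟩ ⟨_, hq'⟩)
  have hxq : x ∈ (q.map (Embedding.induce A).toHom).support := heq ▸ hx
  rw [Walk.support_map, List.mem_map] at hxq
  obtain ⟨y, -, rfl⟩ := hxq
  exact y.2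

/-- A path from one convex set to another one meeting it passes through their intersection. -/
lemma exists_mem_support_inter (hT : T.Connected) (hA : T.IsPathConvex A)
    (hC : T.IsPathConvex C) (hAC : (A ∩ C).Nonempty) {a b : ι} (p : T.Walk a b)
    (hp : p.IsPath) (ha : a ∈ A) (hb : b ∈ C) : ∃ x ∈ p.support, x ∈ A ∩ C := by
  classical
  induction p with
  | nil => exact ⟨_, by simp, ha, hb⟩
  | @cons a a' b h p ih =>
    by_cases ha' : a' ∈ A
    · obtain ⟨x, hx, hxAC⟩ := ih hp.of_cons ha' hb
      exact ⟨x, by simp [hx], hxAC⟩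
    · obtain ⟨c, hcA, hcC⟩ := hAC
      obtain ⟨q, hq⟩ := hT.exists_isPath c a
      have hp_notMem : ∀ x ∈ p.support, x ∉ A := by
        intro x hx hxA
        have hpath : (Walk.cons h (p.takeUntil x hx)).IsPath := by
          rw [Walk.cons_isPath_iff] at hp ⊢
          exact ⟨hp.1.takeUntil hx, fun h' => hp.2 (p.support_takeUntil_subset_support hx h')⟩
        exact ha' (hA ha hxA _ hpath a' (by simp))
      have happ : (q.append (Walk.cons h p)).IsPath := by
        rw [Walk.isPath_def, Walk.support_append, Walk.support_cons, List.tail_cons,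
          List.nodup_append]
        refine ⟨hq.support_nodup, hp.of_cons.support_nodup, ?_⟩
        rintro x hx _ hy rfl
        exact hp_notMem x hy (hA hcA ha q hq x hx)
      exact ⟨a, by simp, ha, hC hcC hb _ happ a (by simp)⟩

lemma inter_inter_nonempty (hT : T.Connected) (hA : T.IsPathConvex A) (hB : T.IsPathConvex B)
    (hC : T.IsPathConvex C) (hAB : (A ∩ B).Nonempty) (hBC : (B ∩ C).Nonempty)
    (hAC : (A ∩ C).Nonempty) : (A ∩ B ∩ C).Nonempty := by
  obtain ⟨a, haA, haB⟩ := hAB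
  obtain ⟨b, hbB, hbC⟩ := hBC
  obtain ⟨p, hp⟩ := hT.exists_isPath a b
  obtain ⟨x, hx, hxA, hxC⟩ := hA.exists_mem_support_inter hT hC hAC p hp haA hbC
  exact ⟨x, ⟨hxA, hB haB hbB p hp x hx⟩, hxC⟩

/-- The Helly property of finite families of path-convex sets. -/
lemma exists_forall_mem {α : Type*} (hT : T.Connected) (A : α → Set ι) (s : Finset α)
    (hA : ∀ v ∈ s, T.IsPathConvex (A v))
    (hpair : ∀ u ∈ s, ∀ v ∈ s, (A u ∩ A v).Nonempty)
    (hB : T.IsPathConvex B) (hne : B.Nonempty) (hBA : ∀ v ∈ s, (B ∩ A v).Nonempty) :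
    ∃ x ∈ B, ∀ v ∈ s, x ∈ A v := by
  classical
  induction s using Finset.induction_on generalizing B with
  | empty => exact ⟨hne.some, hne.some_mem, by simp⟩
  | insert v s _ ih =>
    simp only [Finset.forall_mem_insert] at hA hpair hBA
    obtain ⟨x, hx, hxs⟩ := ih hA.2 (fun u hu w hw => (hpair.2 u hu).2 w hw) (hB.inter hA.1)
      hBA.1 fun w hw => hB.inter_inter_nonempty hT hA.1 (hA.2 w hw) hBA.1
        (hpair.1.2 w hw) (hBA.2 w hw)
    exact ⟨x, hx.1, by simpa using ⟨hx.2, hxs⟩⟩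

end IsPathConvex

section StarGlue

variable {κ : Type*} {τ : κ → Type*} (T : ∀ c, SimpleGraph (τ c)) (r : ∀ c, τ c)

/-- Adjacency of the graph joining a new node `none` to the root of each `T c`. -/
inductive StarGlueAdj : Option (Σ c, τ c) → Option (Σ c, τ c) → Prop
  | toRoot (c : κ) : StarGlueAdj none (some ⟨c, r c⟩)
  | fromRoot (c : κ) : StarGlueAdj (some ⟨c, r c⟩) none
  | inner {c : κ} {i j : τ c} (h : (T c).Adj i j) : StarGlueAdj (some ⟨c, i⟩) (some ⟨c, j⟩)

/-- The disjoint union of the graphs `T c` and a new node `none`, joined to each root `r c`. -/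
def starGlue : SimpleGraph (Option (Σ c, τ c)) where
  Adj := StarGlueAdj T r
  symm := ⟨by
    rintro _ _ (c | c | h)
    exacts [.fromRoot c, .toRoot c, .inner h.symm]⟩
  loopless := ⟨by
    rintro _ h
    cases h with
    | inner h => exact h.ne rfl⟩

/-- The inclusion of `T c` into the glued graph. -/
def starGlueHom (c : κ) : T c →g starGlue T r where
  toFun i := some ⟨c, i⟩
  map_rel' h := .inner h

variable {T}

lemma starGlue_connected (hT : ∀ c, (T c).Connected) : (starGlue T r).Connected := by
  rw [connected_iff_exists_forall_reachable]
  refine ⟨none, ?_⟩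
  rintro (_ | ⟨c, i⟩)
  · rfl
  · have hroot : (starGlue T r).Adj none (some ⟨c, r c⟩) := .toRoot c
    exact hroot.reachable.trans (((hT c).preconnected (r c) i).map (starGlueHom T r c))

lemma Reachable.lift_of_adj {V W : Type*} {G : SimpleGraph V} {H : SimpleGraph W} (f : V → W)
    (hf : ∀ ⦃x y⦄, G.Adj x y → H.Reachable (f x) (f y)) {x y : V} (h : G.Reachable x y) :
    H.Reachable (f x) (f y) := by
  obtain ⟨p⟩ := h
  induction p with
  | nil => rfl
  | cons h _ ih => exact (hf h).trans ih

open Classical in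
/-- The retraction of the glued graph onto `T c`, sending everything else to the root. -/
noncomputable def starGlueRetract (c : κ) : Option (Σ c, τ c) → τ c
  | none => r c
  | some ⟨d, i⟩ => if h : d = c then h ▸ i else r c

lemma starGlueRetract_same (c : κ) (i : τ c) : starGlueRetract r c (some ⟨c, i⟩) = i := by
  simp [starGlueRetract]

lemma starGlueRetract_ne {c d : κ} (h : d ≠ c) (i : τ d) :
    starGlueRetract r c (some ⟨d, i⟩) = r c := by
  simp [starGlueRetract, h]

lemma starGlueRetract_root (c d : κ) : starGlueRetract r c (some ⟨d, r d⟩) = r c := by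
  by_cases h : d = c
  · subst h
    exact starGlueRetract_same r d _
  · exact starGlueRetract_ne r h _

lemma starGlue_isBridge_root (c : κ) :
    (starGlue T r).IsBridge s(none, some ⟨c, r c⟩) := by
  rw [isBridge_iff]
  intro h
  let f : Option (Σ c, τ c) → Prop := fun x => ∃ i, x = some ⟨c, i⟩
  have key := h.lift_of_adj (H := (⊥ : SimpleGraph Prop)) f (by
    intro x y hxy
    rw [deleteEdges_adj] at hxy
    obtain ⟨hxy, hne⟩ := hxy
    suffices f x = f y by rw [this]
    cases hxy with
    | toRoot d =>
      have hdc : d ≠ c := by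
        rintro rfl
        exact hne rfl
      simp [f, hdc]
    | fromRoot d =>
      have hdc : d ≠ c := by
        rintro rfl
        exact hne Sym2.eq_swap
      simp [f, hdc]
    | @inner d i j hij =>
      by_cases hdc : d = c
      · subst hdc
        simp [f]
      · simp [f, hdc])
  rw [reachable_bot] at key
  simp [f] at key

lemma starGlue_isAcyclic (hT : ∀ c, (T c).IsAcyclic) : (starGlue T r).IsAcyclic := by
  rw [isAcyclic_iff_forall_adj_isBridge]
  intro u v huv
  cases huv with
  | toRoot c => exact starGlue_isBridge_root r c
  | fromRoot c =>
    rw [Sym2.eq_swap]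
    exact starGlue_isBridge_root r c
  | @inner c i j hij =>
    have hbridge := isAcyclic_iff_forall_adj_isBridge.mp (hT c) hij
    rw [isBridge_iff] at hbridge ⊢
    intro h
    apply hbridge
    have key := h.lift_of_adj (H := (T c).deleteEdges {s(i, j)}) (starGlueRetract r c) (by
      intro x y hxy
      rw [deleteEdges_adj] at hxy
      obtain ⟨hxy, hne⟩ := hxy
      cases hxy with
      | toRoot d => rw [starGlueRetract_root]; rfl
      | fromRoot d => rw [starGlueRetract_root]; rfl
      | @inner d k l hkl =>
        by_cases hdc : d = c
        · subst hdc
          rw [starGlueRetract_same, starGlueRetract_same]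
          refine Adj.reachable ?_
          rw [deleteEdges_adj]
          refine ⟨hkl, fun hmem => hne ?_⟩
          have heq : s(k, l) = s(i, j) := hmem
          exact congrArg (Sym2.map fun t => (some ⟨d, t⟩ : Option (Σ c, τ c))) heq
        · rw [starGlueRetract_ne r hdc, starGlueRetract_ne r hdc])
    rwa [starGlueRetract_same, starGlueRetract_same] at key

lemma starGlue_isTree (hT : ∀ c, (T c).IsTree) : (starGlue T r).IsTree :=
  ⟨starGlue_connected r fun c => (hT c).connected, starGlue_isAcyclic r fun c => (hT c).isAcyclic⟩

end StarGlue

end SimpleGraph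

namespace TreeDecomp

variable {V ι : Type} {G : SimpleGraph V}

/-- Every finite clique lies in some bag of a tree-decomposition. -/
lemma exists_bag_of_isClique (td : TreeDecomp G ι) (s : Finset V) (hs : G.IsClique s) :
    ∃ i, s ⊆ td.bag i := by
  have hne := td.isTree.connected.nonempty
  obtain ⟨x, -, hx⟩ := SimpleGraph.IsPathConvex.exists_forall_mem td.isTree.connected
    (fun v => {i | v ∈ td.bag i}) s
    (fun v _ => .of_induce_connected td.isTree.isAcyclic (td.bags_connected v))
    (fun u hu v hv => by
      by_cases huv : u = v
      · subst huv
        obtain ⟨i, hi⟩ := td.bags_cover u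
        exact ⟨i, hi, hi⟩
      · exact td.edges_covered (hs hu hv huv))
    .univ Set.univ_nonempty
    (fun v _ => by
      obtain ⟨i, hi⟩ := td.bags_cover v
      exact ⟨i, trivial, hi⟩)
  exact ⟨x, hx⟩

/-- The restriction of a tree-decomposition to an induced subgraph. -/
noncomputable def induce (td : TreeDecomp G ι) (U : Set V) : TreeDecomp (G.induce U) ι where
  tree := td.tree
  isTree := td.isTree
  bag i := (td.bag i).preimage Subtype.val Subtype.val_injective.injOn
  bags_cover v := by simpa using td.bags_cover v
  edges_covered u v huv := by simpa using td.edges_covered (show G.Adj u v from huv)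
  bags_connected v := by
    have heq : {i | v ∈ (td.bag i).preimage Subtype.val Subtype.val_injective.injOn} =
        {i | v.1 ∈ td.bag i} := Set.ext fun i => Finset.mem_preimage
    rw [heq]
    exact td.bags_connected v

lemma card_bag_induce_le (td : TreeDecomp G ι) (U : Set V) (i : ι) :
    ((td.induce U).bag i).card ≤ (td.bag i).card :=
  Finset.card_le_card_of_injOn Subtype.val (fun v hv => by simpa [induce] using hv)
    Subtype.val_injective.injOn

/-- The tree-decomposition with a single bag. -/
def single [Fintype V] (G : SimpleGraph V) : TreeDecomp G Unit where
  tree := ⊥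
  isTree := .of_subsingleton
  bag _ := Finset.univ
  bags_cover _ := ⟨(), Finset.mem_univ _⟩
  edges_covered _ _ _ := ⟨(), Finset.mem_univ _, Finset.mem_univ _⟩
  bags_connected _ := by
    rw [SimpleGraph.connected_iff_exists_forall_reachable]
    refine ⟨⟨(), Finset.mem_univ _⟩, fun w => ?_⟩
    rw [Subsingleton.elim w]

end TreeDecomp

section Treewidth

variable {V : Type} {G : SimpleGraph V}

lemma exists_treeDecomp_card_le_treewidth [Finite V] (G : SimpleGraph V) :
    ∃ (ι : Type) (td : TreeDecomp G ι), ∀ i, (td.bag i).card ≤ treewidth G + 1 := by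
  have := Fintype.ofFinite V
  exact Nat.sInf_mem
    (s := {k | ∃ (ι : Type) (td : TreeDecomp G ι), ∀ i : ι, (td.bag i).card ≤ k + 1})
    ⟨Fintype.card V, Unit, .single G, fun _ => (Finset.card_le_univ _).trans (Nat.le_succ _)⟩

lemma treewidth_le {ι : Type} (td : TreeDecomp G ι) {k : ℕ}
    (h : ∀ i, (td.bag i).card ≤ k + 1) : treewidth G ≤ k :=
  Nat.sInf_le ⟨ι, td, h⟩

lemma treewidth_induce_le [Finite V] (U : Set V) : treewidth (G.induce U) ≤ treewidth G := by
  obtain ⟨ι, td, htd⟩ := exists_treeDecomp_card_le_treewidth G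
  exact treewidth_le (td.induce U) fun i => (td.card_bag_induce_le U i).trans (htd i)

lemma ncard_le_treewidth_of_isClique [Finite V] {S : Set V} (hS : G.IsClique S) :
    S.ncard ≤ treewidth G + 1 := by
  obtain ⟨ι, td, htd⟩ := exists_treeDecomp_card_le_treewidth G
  obtain ⟨i, hi⟩ := td.exists_bag_of_isClique S.toFinite.toFinset (by simpa using hS)
  rw [Set.ncard_eq_toFinset_card S]
  exact (Finset.card_le_card hi).trans (htd i)

end Treewidth

section Components

variable {V : Type} {G : SimpleGraph V} {S C D : Set V}

lemma exists_isCompOf_mem [Finite V] {v : V} (hv : v ∉ S) : ∃ C, IsCompOf G S C ∧ v ∈ C := by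
  obtain ⟨C, hle, hmax⟩ := Finite.exists_le_maximal
    (p := fun C : Set V => Disjoint C S ∧ (G.induce C).Connected) (a := {v})
    ⟨by simpa using hv, SimpleGraph.IsTree.of_subsingleton.connected⟩
  have hvC : v ∈ C := hle rfl
  exact ⟨C, ⟨⟨v, hvC⟩, hmax.prop.1, hmax.prop.2, fun D hCD hDS hD =>
    (hmax.eq_of_le ⟨hDS, hD⟩ hCD).symm⟩, hvC⟩

lemma IsCompOf.eq_of_mem (hC : IsCompOf G S C) (hD : IsCompOf G S D) {v : V} (hvC : v ∈ C)
    (hvD : v ∈ D) : C = D := by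
  have hconn := SimpleGraph.induce_union_connected hC.2.2.1.preconnected hD.2.2.1.preconnected
    ⟨v, hvC, hvD⟩
  have hdisj : Disjoint (C ∪ D) S := hC.2.1.union_left hD.2.1
  exact (hC.2.2.2 _ Set.subset_union_left hdisj hconn).symm.trans
    (hD.2.2.2 _ Set.subset_union_right hdisj hconn)

lemma IsCompOf.nbhd_subset (hC : IsCompOf G S C) : nbhd G C ⊆ S := by
  rintro v ⟨hvC, u, huC, huv⟩
  by_contra hvS
  have hconn := SimpleGraph.induce_union_connected hC.2.2.1.preconnected
    (SimpleGraph.induce_pair_connected_of_adj huv).preconnected ⟨u, huC, Set.mem_insert _ _⟩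
  have hdisj : Disjoint (C ∪ {u, v}) S := by
    refine hC.2.1.union_left (Set.disjoint_left.mpr ?_)
    rintro x (rfl | rfl)
    exacts [Set.disjoint_left.mp hC.2.1 huC, hvS]
  have heq := hC.2.2.2 _ Set.subset_union_left hdisj hconn
  exact hvC (heq ▸ Or.inr (by simp))

lemma IsCompOf.mem_of_mem_union_nbhd (hC : IsCompOf G S C) {v : V} (hv : v ∈ C ∪ nbhd G C)
    (hvS : v ∉ S) : v ∈ C :=
  hv.resolve_right fun h => hvS (hC.nbhd_subset h)

end Components

namespace TreeDecomp

variable {V : Type} [Finite V] {G : SimpleGraph V} {S : Set V}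

/-- Glue tree-decompositions of the graphs `G[C ∪ N(C)]`, for `C` a component of `G` minus `S`,
to a new bag `S`, at nodes whose bags contain `N(C)`. -/
noncomputable def glueComponents {τ : {C // IsCompOf G S C} → Type}
    (td : ∀ C, TreeDecomp (G.induce (C.1 ∪ nbhd G C.1)) (τ C)) (r : ∀ C, τ C)
    (hr : ∀ C v, v.1 ∈ nbhd G C.1 → v ∈ (td C).bag (r C)) :
    TreeDecomp G (Option (Σ C, τ C)) where
  tree := SimpleGraph.starGlue (fun C => (td C).tree) r
  isTree := SimpleGraph.starGlue_isTree r fun C => (td C).isTree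
  bag
    | none => S.toFinite.toFinset
    | some ⟨C, i⟩ => ((td C).bag i).map (Function.Embedding.subtype _)
  bags_cover v := by
    by_cases hv : v ∈ S
    · exact ⟨none, by simpa using hv⟩
    · obtain ⟨C, hC, hvC⟩ := exists_isCompOf_mem (G := G) hv
      obtain ⟨i, hi⟩ := (td ⟨C, hC⟩).bags_cover ⟨v, Or.inl hvC⟩
      exact ⟨some ⟨⟨C, hC⟩, i⟩, Finset.mem_map_of_mem _ hi⟩
  edges_covered := by
    have key : ∀ ⦃u v : V⦄, G.Adj u v → u ∉ S → ∃ (C : {C // IsCompOf G S C}) (i : τ C),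
        u ∈ ((td C).bag i).map (Function.Embedding.subtype _) ∧
        v ∈ ((td C).bag i).map (Function.Embedding.subtype _) := by
      intro u v huv hu
      obtain ⟨C, hC, huC⟩ := exists_isCompOf_mem (G := G) hu
      have hv : v ∈ C ∪ nbhd G C := by
        by_cases hvC : v ∈ C
        · exact Or.inl hvC
        · exact Or.inr ⟨hvC, u, huC, huv⟩
      obtain ⟨i, hi, hj⟩ := (td ⟨C, hC⟩).edges_covered
        (u := ⟨u, Or.inl huC⟩) (v := ⟨v, hv⟩) huv
      exact ⟨⟨C, hC⟩, i, Finset.mem_map_of_mem _ hi, Finset.mem_map_of_mem _ hj⟩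
    intro u v huv
    by_cases hu : u ∈ S
    · by_cases hv : v ∈ S
      · exact ⟨none, by simpa using hu, by simpa using hv⟩
      · obtain ⟨C, i, h⟩ := key huv.symm hv
        exact ⟨some ⟨C, i⟩, h.symm⟩
    · obtain ⟨C, i, h⟩ := key huv hu
      exact ⟨some ⟨C, i⟩, h⟩
  bags_connected v := by
    rw [SimpleGraph.connected_iff_exists_forall_reachable]
    have inner (C : {C // IsCompOf G S C}) (w : ↥(C.1 ∪ nbhd G C.1)) (i j : τ C)
        (hi : w ∈ (td C).bag i) (hj : w ∈ (td C).bag j) (P : Set (Option (Σ C, τ C)))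
        (hP : ∀ k, w ∈ (td C).bag k → some ⟨C, k⟩ ∈ P) :
        ((SimpleGraph.starGlue (fun C => (td C).tree) r).induce P).Reachable
          ⟨some ⟨C, i⟩, hP i hi⟩ ⟨some ⟨C, j⟩, hP j hj⟩ := by
      let f : (td C).tree.induce {k | w ∈ (td C).bag k} →g
          (SimpleGraph.starGlue (fun C => (td C).tree) r).induce P :=
        { toFun := fun k => ⟨some ⟨C, k.1⟩, hP k.1 k.2⟩
          map_rel' := fun h => SimpleGraph.StarGlueAdj.inner h }
      exact (((td C).bags_connected w).preconnected ⟨i, hi⟩ ⟨j, hj⟩).map f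
    by_cases hv : v ∈ S
    · refine ⟨⟨none, by simpa using hv⟩, ?_⟩
      rintro ⟨_ | ⟨C, i⟩, hx⟩
      · rfl
      · obtain ⟨w, hw, rfl⟩ := Finset.mem_map.mp hx
        have hwN : w.1 ∈ nbhd G C.1 :=
          w.2.resolve_left fun h => Set.disjoint_left.mp C.2.2.1 h hv
        refine SimpleGraph.Reachable.trans (SimpleGraph.Adj.reachable ?_)
          (inner C w (r C) i (hr C w hwN) hw _ fun k hk => Finset.mem_map_of_mem _ hk)
        exact .toRoot C
    · obtain ⟨C, hC, hvC⟩ := exists_isCompOf_mem (G := G) hv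
      obtain ⟨i, hi⟩ := (td ⟨C, hC⟩).bags_cover ⟨v, Or.inl hvC⟩
      refine ⟨⟨some ⟨⟨C, hC⟩, i⟩,
        Finset.mem_map_of_mem (Function.Embedding.subtype _) hi⟩, ?_⟩
      rintro ⟨_ | ⟨⟨D, hD⟩, j⟩, hx⟩
      · exact absurd (by simpa using hx) hv
      · obtain ⟨w, hw, rfl⟩ := Finset.mem_map.mp hx
        obtain rfl := hC.eq_of_mem hD hvC (hD.mem_of_mem_union_nbhd w.2 hv)
        exact inner ⟨C, hC⟩ w i j hi hw _ fun k hk => Finset.mem_map_of_mem _ hk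

end TreeDecomp

lemma treewidth_le_of_components {V : Type} [Finite V] {G : SimpleGraph V} {S : Set V}
    (hclique : G.IsClique S) {k : ℕ} (hS : S.ncard ≤ k + 1)
    (hk : ∀ C, IsCompOf G S C → treewidth (G.induce (C ∪ nbhd G C)) ≤ k) :
    treewidth G ≤ k := by
  choose τ td htd using fun C : {C // IsCompOf G S C} =>
    exists_treeDecomp_card_le_treewidth (G.induce (C.1 ∪ nbhd G C.1))
  have hroot (C : {C // IsCompOf G S C}) :
      ∃ i, ∀ v : ↥(C.1 ∪ nbhd G C.1), v.1 ∈ nbhd G C.1 → v ∈ (td C).bag i := by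
    obtain ⟨i, hi⟩ := (td C).exists_bag_of_isClique
      (Set.toFinite {v : ↥(C.1 ∪ nbhd G C.1) | v.1 ∈ nbhd G C.1}).toFinset (by
        rw [Set.Finite.coe_toFinset]
        intro u hu v hv huv
        exact hclique (C.2.nbhd_subset hu) (C.2.nbhd_subset hv)
          fun h => huv (Subtype.ext h))
    exact ⟨i, fun v hv => hi (by simpa using hv)⟩
  choose r hr using hroot
  refine treewidth_le (TreeDecomp.glueComponents td r hr) ?_
  rintro (_ | ⟨C, i⟩)
  · simpa [TreeDecomp.glueComponents, ← Set.ncard_eq_toFinset_card S] using hS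
  · simpa [TreeDecomp.glueComponents] using
      (htd C i).trans (Nat.add_le_add_right (hk C.1 C.2) 1)

/-- if `S` is a clique separator of `G`, then `tw(G)` is the larger
of `|S| - 1` and the maximum of `tw(G[C ∪ N_G(C)])` over components `C` of `G - S`. -/
theorem treewidth_clique_separator {V : Type} [Fintype V] (G : SimpleGraph V)
    (S : Set V) (hclique : G.IsClique S) (hsep : IsSeparator G S) :
    treewidth G = max (S.ncard - 1)
      (sSup {k : ℕ | ∃ C : Set V, IsCompOf G S C ∧
        k = treewidth (G.induce (C ∪ nbhd G C))}) := by
  have hle : ∀ k ∈ {k : ℕ | ∃ C : Set V, IsCompOf G S C ∧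
      k = treewidth (G.induce (C ∪ nbhd G C))}, k ≤ treewidth G := by
    rintro _ ⟨C, -, rfl⟩
    exact treewidth_induce_le _
  apply le_antisymm
  · refine treewidth_le_of_components hclique ?_ fun C hC => ?_
    · exact Nat.sub_le_iff_le_add.mp (le_max_left _ _)
    · exact (le_csSup ⟨_, hle⟩ ⟨C, hC, rfl⟩).trans (le_max_right _ _)
  · obtain ⟨C, -, hC, -⟩ := hsep
    exact max_le (Nat.sub_le_iff_le_add.mpr (ncard_le_treewidth_of_isClique hclique))
      (csSup_le ⟨_, C, hC, rfl⟩ hle)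
end
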